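/- Let p be a prime with p ≡ 1 (mod 3), and write p = A² + 3B² with integers A, B and A ≡ 1 (mod 3). Then A = (1/2)·(3·V_p(x² + 2/x) + 1) − p and A = (1/2)·(3·V_p(x + 4/x²) + 1) − p; equivalently, V_p(x² + 2/x) = V_p(x + 4/x²) = (2p − 1 + 2A)/3. -/

import Mathlib

/-- local count at one value `b` -/
lemma local_count {F : Type*} [Field F] [Fintype F] [DecidableEq F] (h3 : (3:F) ≠ 0)
    (h2 : (2:F) ≠ 0) (b : F) :
    3 * (if ∃ x : F, x ≠ 0 ∧ x^3 + 2 = b * x then 1 else 0) +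
      (Finset.univ.filter (fun q : F × F => q.1 * q.2 * (q.1 + q.2) = 2 ∧
        q.1^3 + 2 = b * q.1)).card =
    3 * (Finset.univ.filter (fun x : F => x ≠ 0 ∧ x^3 + 2 = b * x)).card := by
  by_cases hex : ∃ x : F, x ≠ 0 ∧ x^3 + 2 = b * x
  · rw [if_pos hex]
    obtain ⟨x, hx0, hx⟩ := hex
    by_cases hy : ∃ y, x * y * (x + y) = 2
    · obtain ⟨y, hy⟩ := hy
      obtain ⟨z, hz⟩ : ∃ z, z = -x-y := ⟨_, rfl⟩
      have hb : b = x^2 + x*y + y^2 := by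
        apply mul_right_cancel₀ hx0; linear_combination -hx - hy
      have hy0 : y ≠ 0 := by rintro rfl; simp at hy; exact h2 hy.symm
      have hz0 : z ≠ 0 := by
        intro h; rw [hz] at h
        exact h2 (by linear_combination -hy - x*y*h)
      have key : ∀ t : F, (t^3 + 2 = b * t) ↔ (t = x ∨ t = y ∨ t = z) := by
        intro t
        have : t^3 + 2 - b * t = (t - x) * ((t - y) * (t - z)) := by
          rw [hb, hz]; linear_combination -hy
        rw [← sub_eq_zero, this]; simp [sub_eq_zero]
      have e1 : (Finset.univ.filter (fun x : F => x ≠ 0 ∧ x^3 + 2 = b * x)) = {x, y, z} := by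
        ext t; simp only [Finset.mem_filter, Finset.mem_univ, true_and, key, Finset.mem_insert,
          Finset.mem_singleton]
        constructor
        · exact fun h => h.2
        · intro h; refine ⟨?_, h⟩; rcases h with h | h | h <;> rw [h] <;> assumption
      have e2 : (Finset.univ.filter (fun q : F × F => q.1 * q.2 * (q.1 + q.2) = 2 ∧
        q.1^3 + 2 = b * q.1)) = {(x,y),(x,z),(y,x),(y,z),(z,x),(z,y)} := by
        ext ⟨s, t⟩
        simp only [Finset.mem_filter, Finset.mem_univ, true_and, key, Finset.mem_insert,
          Finset.mem_singleton, Prod.mk.injEq]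
        constructor
        · rintro ⟨h, h1 | h1 | h1⟩
          · subst h1
            have : (t - y) * (t - z) = 0 := by
              apply mul_left_cancel₀ hx0
              rw [hz]; linear_combination h - hy
            rcases mul_eq_zero.1 this with h | h <;> simp [sub_eq_zero.1 h]
          · subst h1
            have : (t - x) * (t - z) = 0 := by
              apply mul_left_cancel₀ hy0
              rw [hz]; linear_combination h - hy
            rcases mul_eq_zero.1 this with h | h <;> simp [sub_eq_zero.1 h]
          · subst h1
            have : (t - x) * (t - y) = 0 := by
              apply mul_left_cancel₀ hz0
              rw [hz] at h ⊢; linear_combination h - hy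
            rcases mul_eq_zero.1 this with h | h <;> simp [sub_eq_zero.1 h]
        · rintro (⟨rfl, rfl⟩ | ⟨rfl, rfl⟩ | ⟨rfl, rfl⟩ | ⟨rfl, rfl⟩ | ⟨rfl, rfl⟩ | ⟨rfl, rfl⟩) <;>
            simp <;> (try rw [hz]) <;> linear_combination hy
      rw [e1, e2]
      have hne : ¬ (x = y ∧ x = z) := by
        rintro ⟨rfl, h⟩
        rw [← h] at hz
        have : 3 * x = 0 := by linear_combination hz
        rcases mul_eq_zero.1 this with h | h
        · exact h3 h
        · exact hx0 h
      clear key e1 e2 hz hb hx hy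
      by_cases a1 : x = y <;> by_cases a2 : x = z <;> by_cases a3 : y = z <;>
        simp_all [eq_comm]
    · have e1 : (Finset.univ.filter (fun x : F => x ≠ 0 ∧ x^3 + 2 = b * x)) = {x} := by
        ext t; simp only [Finset.mem_filter, Finset.mem_univ, true_and, Finset.mem_singleton]
        constructor
        · rintro ⟨h0, h⟩
          by_contra hne
          apply hy
          refine ⟨t, ?_⟩
          apply mul_left_cancel₀ (sub_ne_zero.2 hne)
          linear_combination x * h - t * hx
        · rintro rfl; exact ⟨hx0, hx⟩
      have e2 : (Finset.univ.filter (fun q : F × F => q.1 * q.2 * (q.1 + q.2) = 2 ∧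
        q.1^3 + 2 = b * q.1)) = ∅ := by
        rw [Finset.filter_eq_empty_iff]
        rintro ⟨s, t⟩ - ⟨h, h1⟩
        simp only at h h1
        have hs : s ∈ (Finset.univ.filter (fun x : F => x ≠ 0 ∧ x^3 + 2 = b * x)) := by
          simp only [Finset.mem_filter, Finset.mem_univ, true_and]
          refine ⟨?_, h1⟩
          rintro rfl; simp at h; exact h2 h.symm
        rw [e1, Finset.mem_singleton] at hs
        subst hs
        exact hy ⟨t, h⟩
      rw [e1, e2]; simp
  · rw [if_neg hex]
    push Not at hex
    have e1 : (Finset.univ.filter (fun x : F => x ≠ 0 ∧ x^3 + 2 = b * x)) = ∅ := by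
      rw [Finset.filter_eq_empty_iff]; rintro x - ⟨h, h'⟩; exact hex x h h'
    have e2 : (Finset.univ.filter (fun q : F × F => q.1 * q.2 * (q.1 + q.2) = 2 ∧
        q.1^3 + 2 = b * q.1)) = ∅ := by
      rw [Finset.filter_eq_empty_iff]; rintro ⟨x, y⟩ - ⟨h, h'⟩; refine hex x ?_ h'
      intro h0; simp only at h0 h; rw [h0] at h; simp at h; exact h2 h.symm
    rw [e1, e2]; simp

lemma global_count {F : Type*} [Field F] [Fintype F] [DecidableEq F] (h3 : (3:F) ≠ 0)
    (h2 : (2:F) ≠ 0) :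
    3 * (Finset.univ.filter (fun b : F => ∃ x : F, x ≠ 0 ∧ x^3 + 2 = b * x)).card +
      (Finset.univ.filter (fun q : F × F => q.1 * q.2 * (q.1 + q.2) = 2)).card + 3 =
    3 * Fintype.card F := by
  have h := Finset.sum_congr (rfl : (Finset.univ : Finset F) = Finset.univ)
    (fun b _ => local_count h3 h2 b)
  rw [Finset.sum_add_distrib, ← Finset.mul_sum, ← Finset.mul_sum, Finset.sum_boole] at h
  have e1 : ∑ b : F, (Finset.univ.filter (fun x : F => x ≠ 0 ∧ x^3 + 2 = b * x)).card
      = (Finset.univ.filter (fun x : F => x ≠ 0)).card := by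
    rw [Finset.card_eq_sum_card_fiberwise (f := fun x : F => x^2 + 2 / x) (t := Finset.univ)
      (fun _ _ => by simp)]
    refine Finset.sum_congr rfl fun b _ => ?_
    rw [Finset.filter_filter]
    congr 1
    ext x
    simp only [Finset.mem_filter, Finset.mem_univ, true_and]
    refine and_congr_right fun hx => ?_
    rw [← mul_left_inj' hx]
    field_simp
  have e2 : ∑ b : F, (Finset.univ.filter (fun q : F × F => q.1 * q.2 * (q.1 + q.2) = 2 ∧
        q.1^3 + 2 = b * q.1)).card
      = (Finset.univ.filter (fun q : F × F => q.1 * q.2 * (q.1 + q.2) = 2)).card := by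
    rw [Finset.card_eq_sum_card_fiberwise (f := fun q : F × F => q.1^2 + 2 / q.1)
      (t := Finset.univ) (fun _ _ => by simp)]
    refine Finset.sum_congr rfl fun b _ => ?_
    rw [Finset.filter_filter]
    congr 1
    ext ⟨x, y⟩
    simp only [Finset.mem_filter, Finset.mem_univ, true_and]
    refine and_congr_right fun h => ?_
    have hx : x ≠ 0 := by rintro rfl; simp at h; exact h2 h.symm
    rw [← mul_left_inj' hx]
    field_simp
  have e3 : (Finset.univ.filter (fun x : F => x ≠ 0)).card + 1 = Fintype.card F := by
    rw [Finset.filter_ne', Finset.card_erase_of_mem (Finset.mem_univ _), Finset.card_univ]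
    have : 0 < Fintype.card F := Fintype.card_pos
    omega
  rw [e1, e2] at h
  simp only [Nat.cast_id] at h
  omega

lemma pair_count {F : Type*} [Field F] [Fintype F] [DecidableEq F]
    (h2 : (2:F) ≠ 0) (hc : ringChar F ≠ 2) :
    ((Finset.univ.filter (fun q : F × F => q.1 * q.2 * (q.1 + q.2) = 2)).card : ℤ) =
    (Fintype.card F : ℤ) - 1 + ∑ s ∈ Finset.univ.filter (fun s : F => s ≠ 0),
      quadraticChar F (1 + s^3) := by
  have e0 : (Finset.univ.filter (fun q : F × F => q.1 * q.2 * (q.1 + q.2) = 2)).card =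
      (Finset.univ.filter (fun q : F × F => q.1 ≠ 0 ∧ q.2^2 = 1 + q.1^3)).card := by
    refine Finset.card_bij' (fun q _ => (2 / q.1, 1 + 2 / q.1 * q.2))
      (fun q _ => (2 / q.1, (q.2 - 1) / q.1)) ?_ ?_ ?_ ?_
    · rintro ⟨x, y⟩ h
      simp only [Finset.mem_filter, Finset.mem_univ, true_and] at h ⊢
      have hx : x ≠ 0 := by rintro rfl; simp at h; exact h2 h.symm
      refine ⟨div_ne_zero h2 hx, ?_⟩
      field_simp
      linear_combination 4 * h
    · rintro ⟨s, t⟩ h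
      simp only [Finset.mem_filter, Finset.mem_univ, true_and] at h ⊢
      obtain ⟨hs, h⟩ := h
      field_simp
      linear_combination h
    · rintro ⟨x, y⟩ h
      simp only [Finset.mem_filter, Finset.mem_univ, true_and] at h ⊢
      have hx : x ≠ 0 := by rintro rfl; simp at h; exact h2 h.symm
      ext <;> simp <;> field_simp
    · rintro ⟨s, t⟩ h
      simp only [Finset.mem_filter, Finset.mem_univ, true_and] at h ⊢
      obtain ⟨hs, h⟩ := h
      ext <;> simp <;> field_simp
      ring
  rw [e0, Finset.card_eq_sum_card_fiberwise (f := fun q : F × F => q.1)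
    (t := Finset.univ.filter (fun s : F => s ≠ 0)) (fun q hq => by simp at hq; simpa using hq.1)]
  push_cast
  have e3 : ((Finset.univ.filter (fun x : F => x ≠ 0)).card : ℤ) = Fintype.card F - 1 := by
    rw [Finset.filter_ne', Finset.card_erase_of_mem (Finset.mem_univ _), Finset.card_univ]
    have : 0 < Fintype.card F := Fintype.card_pos
    omega
  rw [← e3, Finset.card_eq_sum_ones]
  push_cast
  rw [← Finset.sum_add_distrib]
  refine Finset.sum_congr rfl fun s hs => ?_
  simp only [Finset.mem_filter, Finset.mem_univ, true_and] at hs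
  rw [add_comm, ← quadraticChar_card_sqrts hc]
  congr 1
  refine Finset.card_bij' (fun q _ => q.2) (fun t _ => (s, t)) ?_ ?_ ?_ ?_
  · rintro ⟨x, y⟩ h; simp at h ⊢; rw [← h.2]; exact h.1.2
  · intro t h; simp at h ⊢; exact ⟨hs, h⟩
  · rintro ⟨x, y⟩ h; simp at h ⊢; exact h.2.symm
  · intro t h; rfl

lemma uniq (p : ℤ) (hp : Prime p) (hp0 : 0 < p) (A B s k : ℤ) (h1 : p = A^2 + 3 * B^2)
    (h2 : p = s^2 + 3 * k^2) : A = s ∨ A = -s := by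
  have main : ∀ B : ℤ, p = A^2 + 3 * B^2 → p ∣ A * k - B * s → A = s ∨ A = -s := by
    intro B h1 ⟨m, hm⟩
    have e : p^2 = (A * s + 3 * B * k)^2 + 3 * (A * k - B * s)^2 := by
      rw [sq p]; nth_rewrite 1 [h1]; rw [h2]; ring
    rw [hm] at e
    have hm0 : m = 0 := by
      by_contra h
      have : 0 < m^2 := by positivity
      nlinarith [sq_nonneg (A * s + 3 * B * k), mul_pos hp0 hp0]
    have e2 : p * (k^2 - B^2) = 0 := by
      have : p * (k^2 - B^2) = (A * k - B * s) * (A * k + B * s) := by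
        linear_combination k^2 * h1 - B^2 * h2
      rw [this, hm, hm0]; ring
    have e3 : k^2 - B^2 = 0 := (mul_eq_zero.1 e2).resolve_left hp0.ne'
    exact sq_eq_sq_iff_eq_or_eq_neg.1 (by linarith)
  have : p ∣ (A * k - B * s) * (A * k - (-B) * s) := ⟨k^2 - B^2, by
    linear_combination -k^2 * h1 + B^2 * h2⟩
  rcases hp.dvd_or_dvd this with h | h
  · exact main B h1 h
  · exact main (-B) (by rw [h1]; ring) h

lemma cube_fiber {F : Type*} [Field F] [Fintype F] [DecidableEq F] (w : F) (hw : w^2 + w + 1 = 0)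
    (h3 : (3:F) ≠ 0) (a : F) (ha : a ≠ 0) :
    (Finset.univ.filter (fun x : F => x^3 = a^3)).card = 3 := by
  have hw1 : w ≠ 1 := by rintro rfl; apply h3; linear_combination hw
  have hw0 : w ≠ 0 := by rintro rfl; simp at hw
  have e : (Finset.univ.filter (fun x : F => x^3 = a^3)) = {a, a * w, a * w^2} := by
    ext x
    simp only [Finset.mem_filter, Finset.mem_univ, true_and, Finset.mem_insert,
      Finset.mem_singleton]
    have : x^3 - a^3 = (x - a) * ((x - a * w) * (x - a * w^2)) := by
      linear_combination (a*x^2 - a^2*w*x + a^3*(w-1)) * hw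
    rw [← sub_eq_zero, this]; simp [sub_eq_zero]
  rw [e, Finset.card_eq_three]
  refine ⟨a, a * w, a * w^2, ?_, ?_, ?_, rfl⟩
  · intro h; apply hw1; apply mul_left_cancel₀ ha; rw [← h, mul_one]
  · intro h; 
    have : w^2 = 1 := by apply mul_left_cancel₀ ha; rw [← h, mul_one]
    apply hw1
    have h4 : w = -2 := by linear_combination hw - this
    exact absurd (by rw [h4] at hw; linear_combination hw) h3
  · intro h
    apply hw1
    have := mul_left_cancel₀ ha h
    apply mul_left_cancel₀ hw0
    linear_combination -this

lemma char_cube {F : Type*} [Field F] [Fintype F] (ψ : MulChar F ℂ)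
    (ho : orderOf ψ = 3) (u : F) (h : ψ u = 1) : ∃ x : F, x^3 = u := by
  have hu0 : u ≠ 0 := by rintro rfl; rw [MulChar.map_zero] at h; exact zero_ne_one h
  obtain ⟨g, hg⟩ := IsCyclic.exists_generator (α := Fˣ)
  obtain ⟨k, hk⟩ := Subgroup.mem_zpowers_iff.1 (hg (Units.mk0 u hu0))
  have hψ3 : ψ ^ 3 = 1 := by rw [← ho]; exact pow_orderOf_eq_one ψ
  have h3 : (ψ.toUnitHom g)^3 = 1 := by
    ext
    have := congrArg (fun χ : MulChar F ℂ => χ g) hψ3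
    simpa [MulChar.pow_apply_coe] using this
  have hg1 : ψ.toUnitHom g ≠ 1 := by
    intro hh
    have : ψ = 1 := by
      ext y
      obtain ⟨j, hj⟩ := Subgroup.mem_zpowers_iff.1 (hg y)
      have : ψ.toUnitHom y = 1 := by rw [← hj, map_zpow, hh, one_zpow]
      rw [← MulChar.coe_toUnitHom, this]; simp
    rw [this, orderOf_one] at ho; omega
  have hord : orderOf (ψ.toUnitHom g) = 3 := orderOf_eq_prime h3 hg1
  have hk1 : (ψ.toUnitHom g)^k = 1 := by
    rw [← map_zpow, hk]; ext; rw [MulChar.coe_toUnitHom]; simpa using h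
  have := orderOf_dvd_iff_zpow_eq_one.2 hk1
  rw [hord] at this
  obtain ⟨m, rfl⟩ := this
  refine ⟨((g^m : Fˣ) : F), ?_⟩
  have : ((g^m)^3 : Fˣ) = Units.mk0 u hu0 := by
    rw [← hk, mul_comm, zpow_mul]; norm_cast
  rw [← Units.val_pow_eq_pow_val, this]; rfl

lemma exists_w {F : Type*} [Field F] [Fintype F] (hcard : Fintype.card F % 3 = 1) :
    ∃ w : F, w^2 + w + 1 = 0 := by
  classical
  have : 3 ∣ Fintype.card Fˣ := by
    rw [Fintype.card_units]; omega
  have h3p : Fact (Nat.Prime 3) := ⟨by norm_num⟩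
  obtain ⟨g, hg⟩ := exists_prime_orderOf_dvd_card (G := Fˣ) 3 this
  have h1 : (g : F) ≠ 1 := by
    intro h; have : g = 1 := by ext; simpa using h
    rw [this, orderOf_one] at hg; omega
  have h3 : (g : F)^3 = 1 := by
    rw [← Units.val_pow_eq_pow_val, ← hg, pow_orderOf_eq_one]; rfl
  refine ⟨g, ?_⟩
  apply mul_left_cancel₀ (sub_ne_zero.2 h1); linear_combination h3

lemma main_sum {F : Type*} [Field F] [Fintype F] [DecidableEq F] (hc : ringChar F ≠ 2)
    (hcard : Fintype.card F % 3 = 1) (h3 : (3:F) ≠ 0) :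
    ∃ n d : ℤ, ∑ s ∈ Finset.univ.filter (fun s : F => s ≠ 0), quadraticChar F (1 + s^3) = 3 * n ∧
      4 * (Fintype.card F : ℤ) = (3 * n + 1)^2 + 3 * d^2 := by
  obtain ⟨ω, hω⟩ : ∃ ω : ℂ, IsPrimitiveRoot ω 3 :=
    ⟨_, Complex.isPrimitiveRoot_exp 3 (by norm_num)⟩
  obtain ⟨ψ, hψ⟩ := MulChar.exists_mulChar_orderOf F (n := 3) (by omega) hω
  have hω3 : ω^3 = 1 := hω.pow_eq_one
  have hω1 : ω ≠ 1 := hω.ne_one (by norm_num)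
  have hωs : ω^2 + ω + 1 = 0 := by
    apply mul_left_cancel₀ (sub_ne_zero.2 hω1); linear_combination hω3
  have hω0 : ω ≠ 0 := by rintro rfl; simp at hω3
  have hψ3 : ψ ^ 3 = 1 := by rw [← hψ]; exact pow_orderOf_eq_one ψ
  have hψ3' : ∀ u : F, u ≠ 0 → ψ u ^ 3 = 1 := by
    intro u hu
    have := congrArg (fun χ : MulChar F ℂ => χ u) hψ3
    simpa [MulChar.pow_apply' ψ (show (3:ℕ) ≠ 0 by norm_num), MulChar.one_apply (isUnit_iff_ne_zero.2 hu)] using this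
  have hneg : ψ (-1) = 1 := by
    have a := hψ3' (-1) (by simp)
    have b : ψ (-1) ^ 2 = 1 := by rw [← map_pow]; simp
    linear_combination a - ψ (-1) * b
  have tri : ∀ u : F, u ≠ 0 → ψ u = 1 ∨ ψ u = ω ∨ ψ u = ω^2 := by
    intro u hu
    have h := hψ3' u hu
    have : (ψ u - 1) * ((ψ u - ω) * (ψ u - ω^2)) = 0 := by
      generalize ψ u = x at *
      linear_combination h - (x^2 - ω*x + (ω-1)) * hωs
    simpa [sub_eq_zero] using this
  set χ := quadraticChar F with hχ
  set n : ℂ → ℤ := fun z => ∑ u : F, if ψ u = z then χ (1 + u) else 0 with hn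
  -- orthogonality
  have ne1 : (1:ℂ) ≠ ω := fun h => hω1 h.symm
  have ne2 : (1:ℂ) ≠ ω^2 := by
    intro h; apply hω1; linear_combination hω3 + ω * h
  have ne3 : ω ≠ ω^2 := by
    intro h; apply hω1; apply mul_left_cancel₀ hω0; linear_combination -h
  have expand : ∀ f : ℂ → ℂ, f 0 = 0 → ∑ u : F, (χ (1+u) : ℂ) * f (ψ u) =
      n 1 * f 1 + n ω * f ω + n (ω^2) * f (ω^2) := by
    intro f hf
    simp only [hn]
    push_cast
    rw [Finset.sum_mul, Finset.sum_mul, Finset.sum_mul, ← Finset.sum_add_distrib,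
      ← Finset.sum_add_distrib]
    refine Finset.sum_congr rfl fun u _ => ?_
    by_cases hu : u = 0
    · subst hu
      rw [MulChar.map_zero, hf]
      simp [hω0.symm, (pow_ne_zero 2 hω0).symm]
    · rcases tri u hu with h | h | h <;> rw [h]
      · simp [ne1, ne2]
      · simp [ne1.symm, ne3]
      · simp [ne2.symm, ne3.symm]
  have sum0 : n 1 + n ω + n (ω^2) = -1 := by
    have h := expand (fun z => if z = 0 then 0 else 1) (by simp)
    simp [hω0] at h
    have h' : ∑ u : F, (χ (1+u) : ℂ) * (if u = 0 then (0:ℂ) else 1) = -1 := by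
      have q := quadraticChar_sum_zero hc
      have q2 : ∑ u : F, χ (1+u) = 0 := by
        rw [← q]; exact Fintype.sum_equiv (Equiv.addLeft 1) _ _ (fun _ => rfl)
      have q3 : ∀ u : F, (χ (1+u) : ℂ) * (if u = 0 then (0:ℂ) else 1) =
          χ (1+u) - if u = 0 then (1:ℂ) else 0 := by
        intro u
        by_cases hu : u = 0 <;> simp [hu]
      rw [Finset.sum_congr rfl (fun u _ => q3 u), Finset.sum_sub_distrib]
      rw [← Int.cast_sum, q2]; simp
    have h2 : ∑ u : F, (χ (1+u) : ℂ) * (if u = 0 then (0:ℂ) else 1) =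
      n 1 + n ω + n (ω^2) := by
      rw [← h]; refine Finset.sum_congr rfl fun u _ => ?_
      by_cases hu : u = 0
      · rw [hu, MulChar.map_zero]; simp
      · have : ψ u ≠ 0 := by
          intro h0; have := hψ3' u hu; rw [h0] at this; simp at this
        simp [hu, this]
    rw [h'] at h2
    exact_mod_cast h2.symm
  -- Jacobi sums
  set X : MulChar F ℂ := χ.ringHomComp (Int.castRingHom ℂ) with hX
  have J : ∀ φ : MulChar F ℂ, φ (-1) = 1 → jacobiSum X φ = ∑ u : F, (χ (1+u) : ℂ) * φ u := by
    intro φ hφ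
    rw [jacobiSum]
    symm
    refine Fintype.sum_equiv (Equiv.addLeft 1) _ _ (fun u => ?_)
    have : φ (-u) = φ u := by rw [← neg_one_mul, map_mul, hφ, one_mul]
    simp [hX, this]
  have J1 : jacobiSum X ψ = n 1 + n ω * ω + n (ω^2) * ω^2 := by
    rw [J ψ hneg, expand (fun z => z) rfl]; ring
  have inv : ∀ u, ψ⁻¹ u = (ψ u)^2 := by
    intro u
    have : ψ⁻¹ = ψ^2 := by
      rw [inv_eq_iff_mul_eq_one, ← hψ3, pow_succ' ψ 2]
    rw [this, MulChar.pow_apply' ψ (by norm_num)]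
  have J2 : jacobiSum X ψ⁻¹ = n 1 + n ω * ω^2 + n (ω^2) * ω := by
    rw [J ψ⁻¹ (by rw [inv, hneg]; simp)]
    simp only [inv]
    rw [expand (fun z => z^2) (by simp)]
    linear_combination n (ω^2) * ω * hω3
  have hXinj : X ≠ 1 := by
    rw [hX, MulChar.ringHomComp_ne_one_iff (RingHom.injective_int _)]
    exact quadraticChar_ne_one hc
  have hX2 : X^2 = 1 := by
    have := (quadraticChar_isQuadratic F).comp (Int.castRingHom ℂ)
    exact this.sq_eq_one
  have hψ1 : ψ ≠ 1 := by intro h; rw [h, orderOf_one] at hψ; omega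
  have hXψ : X * ψ ≠ 1 := by
    intro h
    apply hXinj
    have : X = X^2 * (X * ψ)^3 * (X^2)⁻¹ * (ψ^3)⁻¹ * (X^2)⁻¹:= by
      rw [mul_pow, hψ3, hX2]; simp
      rw [pow_succ, hX2, one_mul]
    rw [this, h, hX2, hψ3]; simp
  have hXinv : X⁻¹ = X := by
    rw [inv_eq_iff_mul_eq_one, ← sq, hX2]
  have hJ := jacobiSum_mul_jacobiSum_inv (F := F) (F' := ℂ) (by
    rw [ringChar.eq_zero]; exact (CharP.ringChar_ne_zero_of_finite F).symm) hXinj hψ1 hXψ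
  rw [hXinv, J1, J2] at hJ
  have hquad : (n 1)^2 + (n ω)^2 + (n (ω^2))^2 - n 1 * n ω - n 1 * n (ω^2) - n ω * n (ω^2)
      = (Fintype.card F : ℤ) := by
    have : ((n 1)^2 + (n ω)^2 + (n (ω^2))^2 - n 1 * n ω - n 1 * n (ω^2) - n ω * n (ω^2) : ℂ)
      = (Fintype.card F : ℂ) := by
      rw [← hJ]
      generalize (n 1 : ℂ) = a
      generalize (n ω : ℂ) = b
      generalize (n (ω^2) : ℂ) = c
      linear_combination (-(a*b + a*c)  - b*c ) * hωs - (b^2+c^2 + b*c*ω) * hω3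
    exact_mod_cast this
  refine ⟨n 1, n ω - n (ω^2), ?_, ?_⟩
  · -- cubes
    obtain ⟨w, hw⟩ : ∃ w : F, w^2 + w + 1 = 0 := exists_w hcard
    rw [← Finset.sum_fiberwise_of_maps_to (t := Finset.univ.filter (fun u : F => ψ u = 1))
      (g := fun s => s^3)]
    · simp only [hn]
      rw [← Finset.sum_filter, Finset.mul_sum]
      refine Finset.sum_congr rfl fun u hu => ?_
      simp only [Finset.mem_filter, Finset.mem_univ, true_and] at hu
      obtain ⟨a, rfl⟩ := char_cube ψ hψ u hu
      have ha : a ≠ 0 := by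
        rintro rfl; rw [zero_pow (by norm_num), MulChar.map_zero] at hu; exact zero_ne_one hu
      rw [Finset.sum_congr rfl (g := fun _ => χ (1 + a^3))]
      · rw [Finset.sum_const, Finset.filter_filter]
        have : (Finset.univ.filter (fun x : F => x ≠ 0 ∧ x^3 = a^3)) =
            Finset.univ.filter (fun x : F => x^3 = a^3) := by
          ext x; simp only [Finset.mem_filter, Finset.mem_univ, true_and, and_iff_right_iff_imp]
          rintro h rfl; apply ha; apply pow_eq_zero_iff (n := 3) (by norm_num) |>.1
          rw [← h]; ring
        rw [this, cube_fiber w hw h3 a ha]; simp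
      · intro x hx; simp only [Finset.mem_filter] at hx; rw [hx.2]
    · intro s hs
      simp only [Finset.mem_filter, Finset.mem_univ, true_and] at hs ⊢
      rw [map_pow]; exact hψ3' s hs
  · rw [← hquad]
    have : n 1 = -1 - n ω - n (ω^2) := by linarith
    rw [this]; ring

lemma parity {F : Type*} [Field F] [Fintype F] [DecidableEq F] (hc : ringChar F ≠ 2)
    (hcard : Fintype.card F % 3 = 1) (hodd : Fintype.card F % 2 = 1) (h3 : (3:F) ≠ 0) :
    (∑ s ∈ Finset.univ.filter (fun s : F => s ≠ 0), quadraticChar F (1 + s^3)) % 2 = 1 := by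
  obtain ⟨w, hw⟩ := exists_w hcard
  have hcf := cube_fiber w hw h3 (-1) (by simp)
  have key : ((∑ s ∈ Finset.univ.filter (fun s : F => s ≠ 0), quadraticChar F (1 + s^3) : ℤ) :
      ZMod 2) = 1 := by
    push_cast
    have q : ∀ s : F, ((quadraticChar F (1 + s^3) : ℤ) : ZMod 2) =
        1 + if s^3 = (-1)^3 then 1 else 0 := by
      intro s
      by_cases h : s^3 = (-1)^3
      · have : 1 + s^3 = 0 := by rw [h]; ring
        rw [this, if_pos h]; simp; rfl
      · rw [if_neg h]
        have : 1 + s^3 ≠ 0 := by intro h'; apply h; linear_combination h'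
        rcases quadraticChar_dichotomy this with h | h <;> rw [h] <;> simp
    rw [Finset.filter_ne', Finset.sum_erase_eq_sub (Finset.mem_univ _),
      Finset.sum_congr rfl (fun s _ => q s), Finset.sum_add_distrib, Finset.sum_boole, hcf]
    simp
    have : ((Fintype.card F : ℕ) : ZMod 2) = ((1 : ℕ) : ZMod 2) :=
      (ZMod.natCast_eq_natCast_iff' _ _ _).2 (by omega)
    rw [this]; decide
  have := (ZMod.intCast_eq_intCast_iff' _ 1 2).1 (by rw [key]; simp)
  simpa using this

lemma field_count (p : ℕ) [Fact p.Prime] (hp1 : p % 3 = 1)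
    (A B : ℤ) (hpAB : (p : ℤ) = A ^ 2 + 3 * B ^ 2) (hA : A % 3 = 1) :
    2 * (A + (p : ℤ)) = 3 * ((Finset.univ.filter
      (fun b : ZMod p => ∃ x : ZMod p, x ≠ 0 ∧ x^3 + 2 = b * x)).card : ℤ) + 1 := by
  have hp : p.Prime := Fact.out
  have hp2 : p ≠ 2 := by rintro rfl; omega
  have hodd : p % 2 = 1 := hp.eq_two_or_odd.resolve_left hp2
  have h2 : (2 : ZMod p) ≠ 0 := by
    intro h
    have : p ∣ 2 := (ZMod.natCast_eq_zero_iff 2 p).1 (by exact_mod_cast h)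
    exact hp2 ((Nat.prime_dvd_prime_iff_eq hp Nat.prime_two).1 this)
  have h3 : (3 : ZMod p) ≠ 0 := by
    intro h
    have : p ∣ 3 := (ZMod.natCast_eq_zero_iff 3 p).1 (by exact_mod_cast h)
    have := (Nat.prime_dvd_prime_iff_eq hp Nat.prime_three).1 this
    omega
  have hc : ringChar (ZMod p) ≠ 2 := by rw [ZMod.ringChar_zmod_n]; exact hp2
  have g := global_count h3 h2
  have q := pair_count h2 hc
  obtain ⟨n, d, hn, hd⟩ := main_sum hc (by rw [ZMod.card]; exact hp1) h3
  have par := parity hc (by rw [ZMod.card]; exact hp1) (by rw [ZMod.card]; exact hodd) h3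
  rw [ZMod.card] at g q hd
  rw [hn] at q par
  obtain ⟨s, hs⟩ : ∃ s, 3 * n + 1 = 2 * s := ⟨(3 * n + 1) / 2, by omega⟩
  rw [hs] at hd
  have hde : Even d := by
    have : Even (3 * d^2) := ⟨2 * p - 2 * s^2, by linarith⟩
    rw [Int.even_mul, Int.even_pow' two_ne_zero] at this
    exact this.resolve_left (by decide)
  obtain ⟨k, rfl⟩ := hde
  have hk : (p : ℤ) = s^2 + 3 * k^2 := by linarith
  have hA' : A = -s := by
    rcases uniq p (Nat.prime_iff_prime_int.1 hp) (by exact_mod_cast hp.pos) A B s k hpAB hk with h | h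
    · omega
    · exact h
  omega

lemma range_count (p : ℕ) [Fact p.Prime] (P : ℕ → Prop) [DecidablePred P] (Q : ZMod p → Prop)
    [DecidablePred Q] (h : ∀ b : ℕ, P b ↔ Q b) :
    ((Finset.range p).filter P).card = (Finset.univ.filter Q).card := by
  refine Finset.card_bij' (fun b _ => (b : ZMod p)) (fun b _ => b.val) ?_ ?_ ?_ ?_
  · intro b hb; simp only [Finset.mem_filter, Finset.mem_univ, true_and] at hb ⊢
    exact (h b).1 hb.2
  · intro b hb; simp only [Finset.mem_filter, Finset.mem_univ, true_and, Finset.mem_range] at hb ⊢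
    refine ⟨ZMod.val_lt b, (h _).2 ?_⟩
    rw [ZMod.natCast_zmod_val]; exact hb
  · intro b hb; simp only [Finset.mem_filter, Finset.mem_range] at hb
    exact ZMod.val_cast_of_lt hb.1
  · intro b _; exact ZMod.natCast_zmod_val b

lemma exists_transfer (p : ℕ) [Fact p.Prime] (Q : ZMod p → Prop) :
    (∃ x ∈ Finset.Icc 1 (p - 1), Q ((x : ℕ) : ZMod p)) ↔ ∃ x : ZMod p, x ≠ 0 ∧ Q x := by
  have hp : p.Prime := Fact.out
  constructor
  · rintro ⟨x, hx, h⟩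
    rw [Finset.mem_Icc] at hx
    refine ⟨x, ?_, h⟩
    intro h0
    have := Nat.le_of_dvd (by omega) ((ZMod.natCast_eq_zero_iff x p).1 h0)
    have := hp.pos
    omega
  · rintro ⟨x, hx, h⟩
    refine ⟨x.val, ?_, by rw [ZMod.natCast_zmod_val]; exact h⟩
    have h1 := ZMod.val_lt x
    have h2 : x.val ≠ 0 := by rwa [Ne, ZMod.val_eq_zero]
    rw [Finset.mem_Icc]; omega

theorem stmt_17 (p : ℕ) (hp : p.Prime) (hp1 : p % 3 = 1)
    (A B : ℤ) (hpAB : (p : ℤ) = A ^ 2 + 3 * B ^ 2) (hA : A % 3 = 1) :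
    2 * (A + (p : ℤ)) = 3 * (((Finset.range p).filter (fun b : ℕ =>
      ∃ x ∈ Finset.Icc 1 (p - 1),
        (x : ℤ) ^ 3 + (2) ≡ (b : ℤ) * (x : ℤ) [ZMOD (p : ℤ)])).card : ℤ) + 1 ∧
    2 * (A + (p : ℤ)) = 3 * (((Finset.range p).filter (fun b : ℕ =>
      ∃ x ∈ Finset.Icc 1 (p - 1),
        (x : ℤ) ^ 3 + (4) ≡ (b : ℤ) * (x : ℤ) ^ 2 [ZMOD (p : ℤ)])).card : ℤ) + 1 := by
  have : Fact p.Prime := ⟨hp⟩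
  have key := field_count p hp1 A B hpAB hA
  have h2 : (2 : ZMod p) ≠ 0 := by
    intro h
    have : p ∣ 2 := (ZMod.natCast_eq_zero_iff 2 p).1 (by exact_mod_cast h)
    have := (Nat.prime_dvd_prime_iff_eq hp Nat.prime_two).1 this
    omega
  constructor
  · rw [key, range_count p _ (fun b : ZMod p => ∃ x : ZMod p, x ≠ 0 ∧ x^3 + 2 = b * x)]
    intro b
    rw [← exists_transfer p (fun x => x^3 + 2 = (b : ZMod p) * x)]
    refine exists_congr fun x => and_congr_right fun _ => ?_
    rw [← ZMod.intCast_eq_intCast_iff]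
    push_cast
    rfl
  · rw [key, range_count p _ (fun b : ZMod p => ∃ x : ZMod p, x ≠ 0 ∧ x^3 + 2 = b * x)]
    intro b
    have e : (∃ x : ZMod p, x ≠ 0 ∧ x^3 + 2 = b * x) ↔
        ∃ x : ZMod p, x ≠ 0 ∧ x^3 + 4 = b * x^2 := by
      constructor
      · rintro ⟨x, hx, h⟩
        refine ⟨2 / x, div_ne_zero h2 hx, ?_⟩
        field_simp
        linear_combination 4 * h
      · rintro ⟨x, hx, h⟩
        refine ⟨2 / x, div_ne_zero h2 hx, ?_⟩
        field_simp
        linear_combination h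
    rw [e, ← exists_transfer p (fun x => x^3 + 4 = (b : ZMod p) * x^2)]
    refine exists_congr fun x => and_congr_right fun _ => ?_
    rw [← ZMod.intCast_eq_intCast_iff]
    push_cast
    rfl
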